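/- arXiv:2304.00273 — 2 statements merged into one kernel-verified Lean document; each statement's English description precedes it below -/
import Mathlib

section
/- Every finite-dimensional Zinbiel superalgebra over an arbitrary field is solvable: if Z = Z₀ ⊕ Z₁ is a Zinbiel superalgebra over a field K with dim_K Z < ∞, then there exists s ≥ 1 such that Z^(s) = 0, where Z^(1) = Z and Z^(k+1) = Z^(k)·Z^(k) is the linear span of all products a·b with a, b ∈ Z^(k). -/
open Module Submodule

/-- A Zinbiel superalgebra over a field `K`: a `K`-vector space `Z` with a bilinear
multiplication and a direct sum decomposition `Z = Z₀ ⊕ Z₁` such that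
`Zᵢ·Zⱼ ⊆ Z_{i+j (mod 2)}` and, for all homogeneous `x, y, z`,
`(x·y)·z = x·(y·z + (−1)^{|y||z|} z·y)`. -/
structure ZinbielSuper (K : Type*) [Field K] (Z : Type*) [AddCommGroup Z] [Module K Z] where
  mul : Z →ₗ[K] Z →ₗ[K] Z
  Z0 : Submodule K Z
  Z1 : Submodule K Z
  compl : IsCompl Z0 Z1
  mul00 : ∀ x ∈ Z0, ∀ y ∈ Z0, mul x y ∈ Z0
  mul01 : ∀ x ∈ Z0, ∀ y ∈ Z1, mul x y ∈ Z1
  mul10 : ∀ x ∈ Z1, ∀ y ∈ Z0, mul x y ∈ Z1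
  mul11 : ∀ x ∈ Z1, ∀ y ∈ Z1, mul x y ∈ Z0
  zinb_even : ∀ x y z : Z, (x ∈ Z0 ∨ x ∈ Z1) → (y ∈ Z0 ∨ y ∈ Z1) → (z ∈ Z0 ∨ z ∈ Z1) →
    (y ∈ Z0 ∨ z ∈ Z0) → mul (mul x y) z = mul x (mul y z + mul z y)
  zinb_odd : ∀ x y z : Z, (x ∈ Z0 ∨ x ∈ Z1) → y ∈ Z1 → z ∈ Z1 →
    mul (mul x y) z = mul x (mul y z - mul z y)

variable {K : Type*} [Field K] {Z : Type*} [AddCommGroup Z] [Module K Z]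

/-- The linear span of all products `a·b` with `a ∈ A`, `b ∈ B`. -/
def mulSub (mul : Z →ₗ[K] Z →ₗ[K] Z) (A B : Submodule K Z) : Submodule K Z :=
  Submodule.span K {z : Z | ∃ a ∈ A, ∃ b ∈ B, mul a b = z}

/-- The derived series: `Z^(1) = Z`, `Z^(k+1) = Z^(k)·Z^(k)`. (`derSeries S 0 = ⊤` by convention.) -/
def derSeries (S : ZinbielSuper K Z) : ℕ → Submodule K Z
  | 0 => ⊤
  | 1 => ⊤
  | (k+2) => mulSub S.mul (derSeries S (k+1)) (derSeries S (k+1))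

/-!
Right multiplications by homogeneous elements commute up to sign, and each of them is nilpotent:
an odd one squares to zero, while for even `a` one has `R_a ^ (n + 1) = (n + 1)! R_b` with
`b = L_a ^ n a`. In positive characteristic the factorial vanishes for large `n`. In characteristic
zero `⁅R_a, L_a⁆ = L_a ^ 2`, so the minimal polynomial `p` of `L_a` divides `X ^ 2 p'`; this
forces `p` to be a power of `X`, so `L_a` is nilpotent. Finitely many nilpotent operators commuting
up to sign admit no nonzero invariant subspace `W` contained in the sum of the images of `W`,
whereas the stable term of the chain `Z ⊇ Z·Z ⊇ (Z·Z)·Z ⊇ ⋯` is such a subspace.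
-/

section Commutator

open Polynomial

attribute [local instance] LieRing.ofAssociativeRing

variable {R A : Type*} [CommRing R] [Ring A] [Algebra R A]

theorem lie_pow_of_commute {d x : A} (h : Commute ⁅d, x⁆ x) (n : ℕ) :
    ⁅d, x ^ n⁆ = n • (⁅d, x⁆ * x ^ (n - 1)) := by
  induction n with
  | zero => simp [Ring.lie_def]
  | succ n ih =>
    have leibniz : ⁅d, x ^ (n + 1)⁆ = ⁅d, x ^ n⁆ * x + x ^ n * ⁅d, x⁆ := by
      simp only [Ring.lie_def, pow_succ]
      noncomm_ring
    rw [leibniz, ih, ← (h.pow_right n).eq, add_tsub_cancel_right, succ_nsmul]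
    rcases n with - | n
    · simp
    · rw [add_tsub_cancel_right, smul_mul_assoc, mul_assoc, ← pow_succ]

theorem lie_aeval_of_commute {d x : A} (h : Commute ⁅d, x⁆ x) (p : R[X]) :
    ⁅d, aeval x p⁆ = ⁅d, x⁆ * aeval x (derivative p) := by
  induction p using Polynomial.induction_on' with
  | add p q hp hq => simp only [map_add, lie_add, mul_add, hp, hq]
  | monomial n c =>
    rw [derivative_monomial, aeval_monomial, aeval_monomial, ← Algebra.smul_def,
      ← Algebra.smul_def, LieAlgebra.lie_smul, lie_pow_of_commute h, mul_smul_comm, mul_smul,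
      Nat.cast_smul_eq_nsmul]

theorem exists_eq_C_mul_X_pow_of_dvd_X_pow_mul_derivative [IsDomain R] [CharZero R] {p : R[X]}
    {k : ℕ} (h : p ∣ X ^ k * derivative p) : ∃ (c : R) (n : ℕ), p = C c * X ^ n := by
  rcases eq_or_ne p 0 with rfl | hp
  · exact ⟨0, 0, by simp⟩
  obtain ⟨q, hpq, hXq⟩ := exists_eq_pow_rootMultiplicity_mul_and_not_dvd p hp 0
  rw [C_0, sub_zero] at hpq hXq
  set m := p.rootMultiplicity 0
  have hq_dvd_mul : q ∣ X ^ (k + m) * derivative q := by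
    have hq : q ∣ X ^ k * derivative (X ^ m * q) :=
      (Dvd.intro_left _ rfl).trans (hpq ▸ h)
    rw [derivative_mul, mul_add, ← mul_assoc, ← mul_assoc, ← pow_add] at hq
    exact (dvd_add_right (dvd_mul_left q _)).1 hq
  have hq_dvd : q ∣ derivative q := by
    obtain ⟨r, hr⟩ := hq_dvd_mul
    obtain ⟨t, rfl⟩ := prime_X.pow_dvd_of_dvd_mul_left _ hXq (Dvd.intro _ hr)
    exact ⟨t, mul_left_cancel₀ (pow_ne_zero (k + m) X_ne_zero) (hr.trans (by ring))⟩
  have hq_const : q.natDegree = 0 := derivative_eq_zero.1 (dvd_derivative_iff.1 hq_dvd)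
  exact ⟨q.coeff 0, m, by rw [← eq_C_of_natDegree_eq_zero hq_const, mul_comm, ← hpq]⟩

theorem isNilpotent_of_lie_eq_pow [Algebra K A] [CharZero K] {d x : A} {k : ℕ}
    (hx : IsIntegral K x) (h : ⁅d, x⁆ = x ^ k) : IsNilpotent x := by
  have hcomm : Commute ⁅d, x⁆ x := h ▸ Commute.pow_self x k
  have hdvd : minpoly K x ∣ X ^ k * derivative (minpoly K x) := by
    refine minpoly.dvd K x ?_
    rw [map_mul, map_pow, aeval_X, ← h, ← lie_aeval_of_commute hcomm, minpoly.aeval, lie_zero]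
  obtain ⟨c, n, hp⟩ := exists_eq_C_mul_X_pow_of_dvd_X_pow_mul_derivative hdvd
  have hc : c ≠ 0 := by
    rintro rfl
    exact minpoly.ne_zero hx (by simp [hp])
  have hxn : c • x ^ n = 0 := by
    simpa [hp, Algebra.smul_def] using minpoly.aeval K x
  exact ⟨n, (smul_eq_zero_iff_right hc).1 hxn⟩

end Commutator

section Images

variable {R M N P ι : Type*}

theorem map₂_span_right_eq_iSup_map [CommSemiring R] [AddCommMonoid M] [AddCommMonoid N]
    [AddCommMonoid P] [Module R M] [Module R N] [Module R P] (f : M →ₗ[R] N →ₗ[R] P)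
    (p : Submodule R M) (s : Set N) : map₂ f p (span R s) = ⨆ b ∈ s, p.map (f.flip b) := by
  simp only [span_eq_iSup_of_singleton_spans s, map₂_iSup_right, map₂_span_singleton_eq_map_flip]

theorem map_iSup_map_le_of_mul_eq_or_eq_neg [Ring R] [AddCommGroup M] [Module R M]
    {f : ι → Module.End R M} {g : Module.End R M} {s : Set ι} {W : Submodule R M}
    (hcomm : ∀ b ∈ s, g * f b = f b * g ∨ g * f b = -(f b * g)) (hW : W.map g ≤ W) :
    (⨆ b ∈ s, W.map (f b)).map g ≤ ⨆ b ∈ s, W.map (f b) := by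
  simp only [Submodule.map_iSup, ← Submodule.map_comp, ← Module.End.mul_eq_comp]
  refine iSup₂_mono fun b hb => ?_
  have hswap : W.map (f b * g) ≤ W.map (f b) := by
    rw [Module.End.mul_eq_comp, Submodule.map_comp]
    exact Submodule.map_mono hW
  rcases hcomm b hb with h | h
  · rwa [h]
  · rwa [h, Submodule.map_neg]

theorem le_map_pow_sup [Semiring R] [AddCommMonoid M] [Module R M] {g : Module.End R M}
    {W V : Submodule R M} (hV : V.map g ≤ V) (hW : W ≤ W.map g ⊔ V) (n : ℕ) :
    W ≤ W.map (g ^ n) ⊔ V := by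
  induction n with
  | zero => simp [Module.End.one_eq_id]
  | succ n ih =>
    calc W ≤ W.map g ⊔ V := hW
      _ ≤ (W.map (g ^ n) ⊔ V).map g ⊔ V := by gcongr
      _ = W.map (g ^ (n + 1)) ⊔ (V.map g ⊔ V) := by
        rw [Submodule.map_sup, ← Submodule.map_comp, ← Module.End.mul_eq_comp, ← pow_succ',
          sup_assoc]
      _ = W.map (g ^ (n + 1)) ⊔ V := by rw [sup_eq_right.2 hV]

theorem eq_bot_of_le_iSup_map [Ring R] [AddCommGroup M] [Module R M]
    {f : ι → Module.End R M} {s : Set ι} (hs : s.Finite)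
    (hcomm : ∀ a ∈ s, ∀ b ∈ s, f a * f b = f b * f a ∨ f a * f b = -(f b * f a))
    (hnil : ∀ a ∈ s, IsNilpotent (f a)) {W : Submodule R M} (hinv : ∀ a ∈ s, W.map (f a) ≤ W)
    (hW : W ≤ ⨆ a ∈ s, W.map (f a)) : W = ⊥ := by
  induction s, hs using Set.Finite.induction_on with
  | empty => simpa using hW
  | @insert a s _ _ ih =>
    simp only [Set.forall_mem_insert] at hcomm hnil hinv
    refine ih (fun b hb => (hcomm.2 b hb).2) hnil.2 hinv.2 ?_
    rw [iSup_insert] at hW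
    have hstable := map_iSup_map_le_of_mul_eq_or_eq_neg hcomm.1.2 hinv.1
    obtain ⟨n, hn⟩ := hnil.1
    simpa [hn] using le_map_pow_sup hstable hW n

end Images

theorem mulSub_eq_map₂ (mul : Z →ₗ[K] Z →ₗ[K] Z) (A B : Submodule K Z) :
    mulSub mul A B = map₂ mul A B :=
  (map₂_eq_span_image2 mul A B).symm

namespace ZinbielSuper

variable (S : ZinbielSuper K Z) {a x y z : Z}

/-- An element of `Z₀ ∪ Z₁`. -/
def IsHomogeneous (x : Z) : Prop := x ∈ S.Z0 ∨ x ∈ S.Z1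

theorem homogeneous_induction {motive : Z → Prop} (x : Z)
    (homogeneous : ∀ x, S.IsHomogeneous x → motive x)
    (add : ∀ x y, motive x → motive y → motive (x + y)) : motive x := by
  obtain ⟨u, v, hu, hv, rfl⟩ := codisjoint_iff_exists_add_eq.1 S.compl.codisjoint x
  exact add u v (homogeneous u (.inl hu)) (homogeneous v (.inr hv))

theorem exists_finite_homogeneous_span_eq_top [FiniteDimensional K Z] :
    ∃ s : Set Z, s.Finite ∧ (∀ a ∈ s, S.IsHomogeneous a) ∧ span K s = ⊤ := by
  obtain ⟨s₀, hs₀, hspan₀⟩ := fg_def.1 (IsNoetherian.noetherian S.Z0)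
  obtain ⟨s₁, hs₁, hspan₁⟩ := fg_def.1 (IsNoetherian.noetherian S.Z1)
  refine ⟨s₀ ∪ s₁, hs₀.union hs₁, ?_, ?_⟩
  · rintro a (ha | ha)
    · exact .inl (hspan₀ ▸ subset_span ha)
    · exact .inr (hspan₁ ▸ subset_span ha)
  · rw [span_union, hspan₀, hspan₁, S.compl.sup_eq_top]

/-- Left multiplication `L_a : x ↦ a·x`, valued in the endomorphism ring. -/
abbrev leftMul : Z →ₗ[K] Module.End K Z := S.mul

/-- Right multiplication `R_a : x ↦ x·a`, valued in the endomorphism ring. -/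
abbrev rightMul : Z →ₗ[K] Module.End K Z := S.mul.flip

theorem mul_mul_of_even (h : y ∈ S.Z0 ∨ z ∈ S.Z0) :
    S.mul (S.mul x y) z = S.mul x (S.mul y z + S.mul z y) := by
  induction x using S.homogeneous_induction with
  | add x₁ x₂ h₁ h₂ => simp only [map_add, LinearMap.add_apply, h₁, h₂]; abel
  | homogeneous x hx =>
    rcases h with hy | hz
    · induction z using S.homogeneous_induction with
      | add z₁ z₂ h₁ h₂ => simp only [map_add, LinearMap.add_apply, h₁, h₂]; abel
      | homogeneous z hz => exact S.zinb_even x y z hx (.inl hy) hz (.inl hy)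
    · induction y using S.homogeneous_induction with
      | add y₁ y₂ h₁ h₂ => simp only [map_add, LinearMap.add_apply, h₁, h₂]; abel
      | homogeneous y hy => exact S.zinb_even x y z hx hy (.inl hz) (.inr hz)

theorem mul_mul_of_odd (hy : y ∈ S.Z1) (hz : z ∈ S.Z1) :
    S.mul (S.mul x y) z = S.mul x (S.mul y z - S.mul z y) := by
  induction x using S.homogeneous_induction with
  | add x₁ x₂ h₁ h₂ => simp only [map_add, LinearMap.add_apply, h₁, h₂]
  | homogeneous x hx => exact S.zinb_odd x y z hx hy hz

theorem rightMul_mul_rightMul_of_even (h : y ∈ S.Z0 ∨ z ∈ S.Z0) :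
    S.rightMul z * S.rightMul y = S.rightMul (S.mul y z + S.mul z y) :=
  LinearMap.ext fun _ => S.mul_mul_of_even h

theorem rightMul_mul_rightMul_of_odd (hy : y ∈ S.Z1) (hz : z ∈ S.Z1) :
    S.rightMul z * S.rightMul y = S.rightMul (S.mul y z - S.mul z y) :=
  LinearMap.ext fun _ => S.mul_mul_of_odd hy hz

theorem rightMul_mul_rightMul_eq_or_eq_neg (hy : S.IsHomogeneous y) (hz : S.IsHomogeneous z) :
    S.rightMul y * S.rightMul z = S.rightMul z * S.rightMul y ∨
      S.rightMul y * S.rightMul z = -(S.rightMul z * S.rightMul y) := by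
  by_cases h : y ∈ S.Z0 ∨ z ∈ S.Z0
  · left
    rw [S.rightMul_mul_rightMul_of_even h, S.rightMul_mul_rightMul_of_even h.symm, add_comm]
  · right
    rw [not_or] at h
    have hy₁ := hy.resolve_left h.1
    have hz₁ := hz.resolve_left h.2
    rw [S.rightMul_mul_rightMul_of_odd hy₁ hz₁, S.rightMul_mul_rightMul_of_odd hz₁ hy₁,
      ← map_neg, neg_sub]

theorem lie_rightMul_leftMul (ha : a ∈ S.Z0) : ⁅S.rightMul a, S.leftMul a⁆ = S.leftMul a ^ 2 := by
  ext x
  have h := S.mul_mul_of_even (x := a) (y := x) (.inr ha)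
  simp [Ring.lie_def, pow_two, h]

theorem leftMul_pow_apply_mul_self (ha : a ∈ S.Z0) (n : ℕ) :
    S.mul ((S.leftMul a ^ n) a) a = (n + 1) • (S.leftMul a ^ (n + 1)) a := by
  have hlie : ⁅S.rightMul a, S.leftMul a ^ n⁆ = n • S.leftMul a ^ (n + 1) := by
    have hcomm : Commute ⁅S.rightMul a, S.leftMul a⁆ (S.leftMul a) :=
      S.lie_rightMul_leftMul ha ▸ Commute.pow_self _ 2
    rw [lie_pow_of_commute hcomm, S.lie_rightMul_leftMul ha, ← pow_add]
    rcases n with - | n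
    · simp
    · congr 2; omega
  have happly := LinearMap.congr_fun hlie a
  rw [Ring.lie_def, LinearMap.sub_apply, sub_eq_iff_eq_add] at happly
  simpa [pow_succ, succ_nsmul] using happly

theorem rightMul_pow_succ (ha : a ∈ S.Z0) (n : ℕ) :
    S.rightMul a ^ (n + 1) = (n + 1).factorial • S.rightMul ((S.leftMul a ^ n) a) := by
  induction n with
  | zero => simp
  | succ n ih =>
    have hstep : S.rightMul a * S.rightMul ((S.leftMul a ^ n) a) =
        (n + 2) • S.rightMul ((S.leftMul a ^ (n + 1)) a) := by
      have hleft : S.mul a ((S.leftMul a ^ n) a) = (S.leftMul a ^ (n + 1)) a := by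
        rw [pow_succ', Module.End.mul_apply]
      rw [S.rightMul_mul_rightMul_of_even (.inr ha), S.leftMul_pow_apply_mul_self ha, hleft,
        ← succ_nsmul, map_nsmul]
    rw [pow_succ', ih, mul_smul_comm, hstep, smul_smul, Nat.factorial_succ (n + 1), mul_comm]

theorem isNilpotent_leftMul_of_even [CharZero K] [FiniteDimensional K Z] (ha : a ∈ S.Z0) :
    IsNilpotent (S.leftMul a) :=
  isNilpotent_of_lie_eq_pow (Algebra.IsIntegral.isIntegral (R := K) _) (S.lie_rightMul_leftMul ha)

theorem isNilpotent_rightMul_of_even [FiniteDimensional K Z] (ha : a ∈ S.Z0) :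
    IsNilpotent (S.rightMul a) := by
  rcases CharP.exists' K with _ | ⟨p, hp, _⟩
  · obtain ⟨n, hn⟩ := S.isNilpotent_leftMul_of_even ha
    exact ⟨n + 1, by simp [S.rightMul_pow_succ ha, hn]⟩
  · obtain ⟨n, rfl⟩ := Nat.exists_eq_succ_of_ne_zero hp.out.ne_zero
    have hfactorial : ((n + 1).factorial : K) = 0 :=
      (CharP.cast_eq_zero_iff K (n + 1) _).2 (Nat.dvd_factorial n.succ_pos le_rfl)
    refine ⟨n + 1, ?_⟩
    rw [S.rightMul_pow_succ ha, ← Nat.cast_smul_eq_nsmul K, hfactorial, zero_smul]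

theorem isNilpotent_rightMul_of_odd (ha : a ∈ S.Z1) : IsNilpotent (S.rightMul a) :=
  ⟨2, by rw [pow_two, S.rightMul_mul_rightMul_of_odd ha ha, sub_self, map_zero]⟩

theorem isNilpotent_rightMul [FiniteDimensional K Z] (ha : S.IsHomogeneous a) :
    IsNilpotent (S.rightMul a) :=
  ha.elim S.isNilpotent_rightMul_of_even S.isNilpotent_rightMul_of_odd

theorem eq_bot_of_mulSub_top_eq_self [FiniteDimensional K Z] {W : Submodule K Z}
    (hW : mulSub S.mul W ⊤ = W) : W = ⊥ := by
  obtain ⟨s, hs, hhom, hspan⟩ := S.exists_finite_homogeneous_span_eq_top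
  have hsum : W = ⨆ b ∈ s, W.map (S.rightMul b) := by
    rw [← map₂_span_right_eq_iSup_map, hspan, ← mulSub_eq_map₂, hW]
  refine eq_bot_of_le_iSup_map hs
    (fun y hy z hz => S.rightMul_mul_rightMul_eq_or_eq_neg (hhom y hy) (hhom z hz))
    (fun b hb => S.isNilpotent_rightMul (hhom b hb)) (fun b hb => ?_) hsum.le
  conv_rhs => rw [hsum]
  exact le_iSup₂_of_le b hb le_rfl

/-- The series `Z ⊇ Z·Z ⊇ (Z·Z)·Z ⊇ ⋯` of right powers, indexed so that `rightSeries 0 = Z`. -/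
def rightSeries : ℕ → Submodule K Z
  | 0 => ⊤
  | n + 1 => mulSub S.mul (rightSeries n) ⊤

theorem rightSeries_antitone : Antitone S.rightSeries := by
  refine antitone_nat_of_succ_le fun n => ?_
  induction n with
  | zero => exact le_top
  | succ n ih =>
    simp only [rightSeries, mulSub_eq_map₂] at ih ⊢
    exact map₂_le_map₂_left ih

theorem derSeries_succ_le_rightSeries (n : ℕ) : derSeries S (n + 1) ≤ S.rightSeries n := by
  induction n with
  | zero => exact le_top
  | succ n ih =>
    simp only [derSeries, rightSeries, mulSub_eq_map₂]
    exact map₂_le_map₂ ih le_top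

theorem exists_rightSeries_eq_bot [FiniteDimensional K Z] : ∃ n, S.rightSeries n = ⊥ := by
  obtain ⟨n, hn⟩ := WellFoundedLT.antitone_chain_condition S.rightSeries_antitone
  exact ⟨n, S.eq_bot_of_mulSub_top_eq_self (hn (n + 1) n.le_succ).symm⟩

end ZinbielSuper

/-- Every finite-dimensional Zinbiel superalgebra over an arbitrary field is solvable. -/
theorem zinbielSuper_solvable (K : Type*) [Field K] (Z : Type*) [AddCommGroup Z]
    [Module K Z] [FiniteDimensional K Z] (S : ZinbielSuper K Z) :
    ∃ s : ℕ, 1 ≤ s ∧ derSeries S s = ⊥ := by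
  obtain ⟨n, hn⟩ := S.exists_rightSeries_eq_bot
  exact ⟨n + 1, n.succ_pos, eq_bot_mono (S.derSeries_succ_le_rightSeries n) hn⟩
end

section
/- Let Z = Z₀ ⊕ Z₁ be a finite-dimensional Zinbiel superalgebra over a field with dim Z₁ = 1. Then Z₀·Z₁ = Z₁·Z₀ = 0, and Z₁·Z₁ is contained in the left annihilator of Z₀, i.e. (u·v)·x = 0 for all u, v ∈ Z₁ and all x ∈ Z₀. -/
open Module Submodule

variable {K : Type*} [Field K] {Z : Type*} [AddCommGroup Z] [Module K Z]

/-!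
The symmetrised product `x * y = x·y + y·x` of a Zinbiel algebra is commutative and associative, and
it has no nonzero idempotent: if `f * f = f`, then `f·f = f·(f * f) = (f·f)·f`, so expanding
`f·f = (f * f)·f` gives `f·f = f·f + f·f`, whence `f·f = 0` and `f = 0`. On the other hand, a
finite-dimensional commutative associative algebra with a nonzero homomorphism to a ring without
zero divisors contains a nonzero idempotent. So a finite-dimensional Zinbiel algebra with the
symmetrised product has no such homomorphism.

Right multiplication `ρ x = (u ↦ u·x)` on `Z₁` satisfies `ρ (x * y) = ρ x ∘ ρ y` for even `x, y`,
and by Schur's lemma `End Z₁` has no zero divisors when `dim Z₁ = 1`. Hence `ρ = 0`, that is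
`Z₁·Z₀ = 0`. The identity `(x·u)·x = x·(u·x + x·u)` then says that left multiplication by `x`
squares to zero on `Z₁`, so it vanishes as well.
-/

/-- If `y` minimises `yA` among the elements with `φ y ≠ 0`, then `s = y * y` lies in `s²A`; writing
`s = s² * g`, the idempotent is `s * g`. -/
theorem exists_isIdempotentElem_map_ne_zero (R : Type*) {A M : Type*} [Semiring R]
    [NonUnitalCommSemiring A] [Module R A] [SMulCommClass R A A] [IsArtinian R A]
    [MulZeroClass M] [NoZeroDivisors M] (φ : A →ₙ* M) {a : A} (ha : φ a ≠ 0) :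
    ∃ f, IsIdempotentElem f ∧ φ f ≠ 0 := by
  obtain ⟨y, hy, hmin⟩ := exists_minimalFor_of_wellFoundedLT (fun y ↦ φ y ≠ 0)
    (fun y ↦ (LinearMap.mulLeft R y).range) ⟨a, ha⟩
  set s := y * y with hs
  have hφs : φ s ≠ 0 := by simpa [hs] using hy
  have hle : (LinearMap.mulLeft R (s * s)).range ≤ (LinearMap.mulLeft R y).range := by
    rintro _ ⟨b, rfl⟩
    exact ⟨y * s * b, by simp only [LinearMap.mulLeft_apply, hs, mul_assoc]⟩
  obtain ⟨g, hg⟩ : ∃ g, s * s * g = s :=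
    hmin (j := s * s) (by simpa using hφs) hle ⟨y, rfl⟩
  have hsg : s * (s * g) = s := by rw [← mul_assoc, hg]
  refine ⟨s * g, ?_, fun h ↦ hφs ?_⟩
  · rw [IsIdempotentElem, mul_right_comm, hsg]
  · rw [← hsg, map_mul, h, mul_zero]

/-- The (ungraded) Zinbiel identity for a bilinear multiplication `μ`. The multiplication is kept as
a bilinear map so that `*` remains available for the symmetrised product. -/
def IsZinbiel {R A : Type*} [CommSemiring R] [AddCommMonoid A] [Module R A]
    (μ : A →ₗ[R] A →ₗ[R] A) : Prop :=
  ∀ x y z, μ (μ x y) z = μ x (μ y z + μ z y)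

namespace IsZinbiel

variable {R A : Type*} [CommSemiring R] [AddCommMonoid A] [Module R A] {μ : A →ₗ[R] A →ₗ[R] A}

theorem symm_assoc (hμ : IsZinbiel μ) (x y z : A) :
    μ (μ x y + μ y x) z + μ z (μ x y + μ y x) = μ x (μ y z + μ z y) + μ (μ y z + μ z y) x := by
  simp only [map_add, LinearMap.add_apply, hμ _ _ _]
  abel

/-- The commutative associative (non-unital) semiring structure on a Zinbiel algebra given by the
symmetrised product `x * y = μ x y + μ y x`. -/
abbrev symmSemiring (hμ : IsZinbiel μ) : NonUnitalCommSemiring A where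
  __ := ‹AddCommMonoid A›
  mul x y := μ x y + μ y x
  left_distrib x y z := by
    change μ x (y + z) + μ (y + z) x = (μ x y + μ y x) + (μ x z + μ z x)
    simp only [map_add, LinearMap.add_apply, add_add_add_comm]
  right_distrib x y z := by
    change μ (x + y) z + μ z (x + y) = (μ x z + μ z x) + (μ y z + μ z y)
    simp only [map_add, LinearMap.add_apply, add_add_add_comm]
  zero_mul x := by
    change μ 0 x + μ x 0 = 0
    simp only [map_zero, LinearMap.zero_apply, add_zero]
  mul_zero x := by
    change μ x 0 + μ 0 x = 0
    simp only [map_zero, LinearMap.zero_apply, add_zero]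
  mul_assoc := hμ.symm_assoc
  mul_comm x y := add_comm (μ x y) (μ y x)

theorem eq_zero_of_symm_self [IsLeftCancelAdd A] (hμ : IsZinbiel μ) {f : A}
    (hf : μ f f + μ f f = f) : f = 0 := by
  have hsq : μ f f = μ f f + μ f f :=
    calc μ f f = μ (μ f f + μ f f) f := by rw [hf]
      _ = μ (μ f f) f + μ (μ f f) f := by rw [map_add, LinearMap.add_apply]
      _ = μ f f + μ f f := by rw [hμ, congrArg (μ f) hf]
  have hzero : μ f f = 0 := left_eq_add.mp hsq
  rw [← hf, hzero, add_zero]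

theorem eq_zero_of_map_symm [IsLeftCancelAdd A] [IsArtinian R A] (hμ : IsZinbiel μ) {D : Type*}
    [NonUnitalNonAssocSemiring D] [NoZeroDivisors D] (φ : A →+ D)
    (hφ : ∀ x y, φ (μ x y + μ y x) = φ x * φ y) : φ = 0 := by
  let := hμ.symmSemiring
  have : SMulCommClass R A A := ⟨fun r x y ↦ by
    change r • (μ x y + μ y x) = μ x (r • y) + μ (r • y) x
    simp only [map_smul, LinearMap.smul_apply, smul_add]⟩
  ext a
  by_contra ha
  obtain ⟨f, hf, hφf⟩ := exists_isIdempotentElem_map_ne_zero R (⟨φ, hφ⟩ : A →ₙ* D) ha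
  exact hφf (by rw [hμ.eq_zero_of_symm_self hf]; exact map_zero φ)

end IsZinbiel

theorem noZeroDivisors_end_of_isSimpleModule (R M : Type*) [Ring R] [AddCommGroup M] [Module R M]
    [IsSimpleModule R M] : NoZeroDivisors (End R M) := by
  classical infer_instance

namespace ZinbielSuper

variable (S : ZinbielSuper K Z)

/-- The multiplication of the even part `Z₀`, as a bilinear map on the subtype. -/
def evenMul : S.Z0 →ₗ[K] S.Z0 →ₗ[K] S.Z0 :=
  LinearMap.mk₂ K (fun x y ↦ ⟨S.mul x y, S.mul00 x x.2 y y.2⟩)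
    (by intros; ext; simp) (by intros; ext; simp) (by intros; ext; simp) (by intros; ext; simp)

/-- The action `u ↦ x·u` of an even element `x` on the odd part. -/
def leftOdd : S.Z0 →ₗ[K] End K S.Z1 :=
  LinearMap.mk₂ K (fun x u ↦ ⟨S.mul x u, S.mul01 x x.2 u u.2⟩)
    (by intros; ext; simp) (by intros; ext; simp) (by intros; ext; simp) (by intros; ext; simp)

/-- The action `u ↦ u·x` of an even element `x` on the odd part. -/
def rightOdd : S.Z0 →ₗ[K] End K S.Z1 :=
  LinearMap.mk₂ K (fun x u ↦ ⟨S.mul u x, S.mul10 u u.2 x x.2⟩)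
    (by intros; ext; simp) (by intros; ext; simp) (by intros; ext; simp) (by intros; ext; simp)

theorem isZinbiel_evenMul : IsZinbiel S.evenMul := fun x y z ↦
  Subtype.ext <| S.zinb_even x y z (.inl x.2) (.inl y.2) (.inl z.2) (.inl y.2)

theorem rightOdd_symm (x y : S.Z0) :
    S.rightOdd (S.evenMul x y + S.evenMul y x) = S.rightOdd x * S.rightOdd y := by
  ext u
  rw [add_comm]
  exact (S.zinb_even u y x (.inr u.2) (.inl y.2) (.inl x.2) (.inl y.2)).symm

theorem rightOdd_eq_zero [IsArtinian K S.Z0] [NoZeroDivisors (End K S.Z1)] : S.rightOdd = 0 :=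
  LinearMap.toAddMonoidHom_injective <|
    S.isZinbiel_evenMul.eq_zero_of_map_symm S.rightOdd.toAddMonoidHom S.rightOdd_symm

theorem rightOdd_mul_leftOdd (x : S.Z0) :
    S.rightOdd x * S.leftOdd x = S.leftOdd x * (S.rightOdd x + S.leftOdd x) := by
  ext u
  exact S.zinb_even x u x (.inl x.2) (.inr u.2) (.inl x.2) (.inr x.2)

theorem leftOdd_eq_zero [NoZeroDivisors (End K S.Z1)] (hR : S.rightOdd = 0) : S.leftOdd = 0 := by
  ext1 x
  have hsq : S.leftOdd x * S.leftOdd x = 0 := by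
    simpa [hR] using (S.rightOdd_mul_leftOdd x).symm
  exact mul_self_eq_zero.mp hsq

theorem mul_mul_eq_zero_of_odd {u v x : Z} (hu : u ∈ S.Z1) (hv : v ∈ S.Z1) (hx : x ∈ S.Z0)
    (hvx : S.mul v x = 0) (hxv : S.mul x v = 0) : S.mul (S.mul u v) x = 0 := by
  rw [S.zinb_even u v x (.inr hu) (.inr hv) (.inl hx) (.inr hx), hvx, hxv, add_zero, map_zero]

end ZinbielSuper

/-- In a finite-dimensional Zinbiel superalgebra with `dim Z₁ = 1` one has
`Z₀·Z₁ = Z₁·Z₀ = 0`, and `Z₁·Z₁` lies in the left annihilator of `Z₀`. -/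
theorem dimOne_oddPart (K : Type*) [Field K] (Z : Type*) [AddCommGroup Z]
    [Module K Z] [FiniteDimensional K Z] (S : ZinbielSuper K Z)
    (h1 : finrank K S.Z1 = 1) :
    (∀ x ∈ S.Z0, ∀ u ∈ S.Z1, S.mul x u = 0) ∧
    (∀ u ∈ S.Z1, ∀ x ∈ S.Z0, S.mul u x = 0) ∧
    (∀ u ∈ S.Z1, ∀ v ∈ S.Z1, ∀ x ∈ S.Z0, S.mul (S.mul u v) x = 0) := by
  have : IsSimpleModule K S.Z1 := isSimpleModule_iff_finrank_eq_one.mpr h1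
  have := noZeroDivisors_end_of_isSimpleModule K S.Z1
  have hR : S.rightOdd = 0 := S.rightOdd_eq_zero
  have hL : S.leftOdd = 0 := S.leftOdd_eq_zero hR
  have odd_mul_even (u) (hu : u ∈ S.Z1) (x) (hx : x ∈ S.Z0) : S.mul u x = 0 :=
    congrArg Subtype.val (LinearMap.congr_fun₂ hR ⟨x, hx⟩ ⟨u, hu⟩)
  have even_mul_odd (x) (hx : x ∈ S.Z0) (u) (hu : u ∈ S.Z1) : S.mul x u = 0 :=
    congrArg Subtype.val (LinearMap.congr_fun₂ hL ⟨x, hx⟩ ⟨u, hu⟩)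
  exact ⟨even_mul_odd, odd_mul_even, fun u hu v hv x hx ↦
    S.mul_mul_eq_zero_of_odd hu hv hx (odd_mul_even v hv x hx) (even_mul_odd x hx v hv)⟩
end
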